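/- arXiv:2505.03736 — 4 statements merged into one kernel-verified Lean document; each statement's English description precedes it below -/
import Mathlib

section
/- For the vanilla decentralized normalized gradient method x_i^{t+1} = Σ_{r=1}^n w_{ir}(x_r^t − α ∇f_r(x_r^t)/‖∇f_r(x_r^t)‖): for every even n and every B ≥ 1, there exist local functions {f_i}_{i=1}^n satisfying Assumptions 1–2, a gradient oracle satisfying Assumption 3, a mixing matrix satisfying Assumption 4, and an initialization x₀, such that the associated parameters f_*, L, σ, W, x₀ are independent of B, and for every T ≥ 1 and every step size α > 0, the iterates satisfy (1/(nT)) Σ_{t=0}^{T−1} Σ_{i=1}^n E[‖∇f(x_i^t)‖] ≥ B. -/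
/-!
Normalization discards the lengths of the local gradients, so the method only sees their
directions. If the unit directions at the common starting point sum to zero, averaging cancels all
the normalized steps and no node ever moves. Lengthening a single one of these gradients leaves the
dynamics unchanged but makes the global gradient at the starting point as long as desired.
For `n ≥ 2` nodes the `n`-th roots of unity are such directions in the plane, and
the quadratics `‖z‖² / 2 + ⟪vᵢ, z⟫ + c` realize any prescribed gradients `vᵢ` at `0`.
-/

open scoped InnerProductSpace

section Dynamics

variable {ι E : Type*} [Fintype ι] [NormedAddCommGroup E] [NormedSpace ℝ E]

/-- One step of the vanilla decentralized normalized gradient method with mixing matrix `W`, step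
size `α` and local gradients `g`, from the node states `y`. A node whose gradient vanishes
contributes its state unmoved, since `α / 0 = 0`. -/
noncomputable def normalizedDGDStep (W : Matrix ι ι ℝ) (α : ℝ) (g : ι → E → E) (y : ι → E) (i : ι) :
    E :=
  ∑ r, W i r • (y r - (α / ‖g r (y r)‖) • g r (y r))

theorem normalizedDGDStep_const {W : Matrix ι ι ℝ} {g : ι → E → E} {a : E} {i : ι}
    (hW : ∑ r, W i r = 1) (hcancel : ∑ r, W i r • ‖g r a‖⁻¹ • g r a = 0) (α : ℝ) :
    normalizedDGDStep W α g (fun _ ↦ a) i = a :=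
  calc
    normalizedDGDStep W α g (fun _ ↦ a) i
      = (∑ r, W i r) • a - α • ∑ r, W i r • ‖g r a‖⁻¹ • g r a := by
        simp only [normalizedDGDStep, smul_sub, Finset.sum_sub_distrib, Finset.sum_smul,
          Finset.smul_sum, div_eq_mul_inv, mul_smul, smul_comm α]
    _ = a := by rw [hW, hcancel, one_smul, smul_zero, sub_zero]

theorem normalizedDGD_iterate_eq_const {W : Matrix ι ι ℝ} {g : ι → E → E} {a : E} {α : ℝ}
    {x : ℕ → ι → E} (hW : ∀ i, ∑ r, W i r = 1)
    (hcancel : ∀ i, ∑ r, W i r • ‖g r a‖⁻¹ • g r a = 0) (hzero : ∀ i, x 0 i = a)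
    (hstep : ∀ t i, x (t + 1) i = normalizedDGDStep W α g (x t) i) (t : ℕ) (i : ι) :
    x t i = a := by
  induction t generalizing i with
  | zero => exact hzero i
  | succ t ih => rw [hstep, funext ih, normalizedDGDStep_const (hW i) (hcancel i)]

end Dynamics

section UniformMixing

variable (ι : Type*) [Fintype ι]

/-- The mixing matrix of exact averaging over all nodes: every entry is the inverse of the number
of nodes. -/
noncomputable def uniformMixing : Matrix ι ι ℝ :=
  Matrix.of fun _ _ ↦ (Fintype.card ι : ℝ)⁻¹

variable {ι}

theorem uniformMixing_apply (i r : ι) : uniformMixing ι i r = (Fintype.card ι : ℝ)⁻¹ := rfl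

theorem uniformMixing_pos (i r : ι) : 0 < uniformMixing ι i r :=
  inv_pos.2 (Nat.cast_pos.2 (Fintype.card_pos_iff.2 ⟨i⟩))

theorem sum_uniformMixing_row (i : ι) : ∑ r, uniformMixing ι i r = 1 := by
  have : Nonempty ι := ⟨i⟩
  simp [uniformMixing_apply]

theorem sum_uniformMixing_col (r : ι) : ∑ i, uniformMixing ι i r = 1 :=
  sum_uniformMixing_row r

end UniformMixing

section TiltedQuadratic

variable {E : Type*} [NormedAddCommGroup E] [InnerProductSpace ℝ E]

/-- The quadratic `‖z‖² / 2 + ⟪v, z⟫ + c`, whose gradient at `z` is `z + v`. -/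
noncomputable def tiltedQuadratic (v : E) (c : ℝ) (z : E) : ℝ :=
  ‖z‖ ^ 2 / 2 + ⟪v, z⟫_ℝ + c

theorem hasGradientAt_tiltedQuadratic [CompleteSpace E] (v : E) (c : ℝ) (z : E) :
    HasGradientAt (tiltedQuadratic v c) (z + v) z := by
  rw [hasGradientAt_iff_hasFDerivAt]
  have hsq := (hasStrictFDerivAt_norm_sq z).hasFDerivAt.mul_const (2⁻¹ : ℝ)
  have hlin := (innerSL ℝ v).hasFDerivAt (x := z)
  refine ((hsq.add hlin).add_const c).congr_fderiv ?_
  ext w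
  simp

theorem tiltedQuadratic_half_norm_sq (v z : E) :
    tiltedQuadratic v (‖v‖ ^ 2 / 2) z = ‖z + v‖ ^ 2 / 2 := by
  rw [tiltedQuadratic, norm_add_sq_real, real_inner_comm]
  ring

theorem isGLB_range_tiltedQuadratic (v : E) :
    IsGLB (Set.range (tiltedQuadratic v (‖v‖ ^ 2 / 2))) 0 := by
  refine IsLeast.isGLB ⟨⟨-v, by simp [tiltedQuadratic_half_norm_sq]⟩, ?_⟩
  rintro _ ⟨z, rfl⟩
  rw [tiltedQuadratic_half_norm_sq]
  positivity

theorem average_tiltedQuadratic {ι : Type*} [Fintype ι] [Nonempty ι] (v : ι → E) (c : ℝ) (z : E) :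
    (Fintype.card ι : ℝ)⁻¹ * ∑ i, tiltedQuadratic (v i) c z =
      tiltedQuadratic ((Fintype.card ι : ℝ)⁻¹ • ∑ i, v i) c z := by
  simp only [tiltedQuadratic, Finset.sum_add_distrib, Finset.sum_const, Finset.card_univ,
    nsmul_eq_mul, real_inner_smul_left, sum_inner]
  field_simp

theorem isGLB_range_average_tiltedQuadratic {ι : Type*} [Fintype ι] [Nonempty ι] (v : ι → E) :
    IsGLB (Set.range fun z ↦ (Fintype.card ι : ℝ)⁻¹ *
      ∑ i, tiltedQuadratic (v i) (‖(Fintype.card ι : ℝ)⁻¹ • ∑ i, v i‖ ^ 2 / 2) z) 0 := by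
  simp only [average_tiltedQuadratic]
  exact isGLB_range_tiltedQuadratic _

end TiltedQuadratic

section Directions

theorem exists_unit_vectors_sum_eq_zero {n : ℕ} (hn : 2 ≤ n) :
    ∃ u : Fin n → EuclideanSpace ℝ (Fin 2), (∀ i, ‖u i‖ = 1) ∧ ∑ i, u i = 0 := by
  have hζ := Complex.isPrimitiveRoot_exp n (by lia)
  set ζ := Complex.exp (2 * Real.pi * Complex.I / n)
  refine ⟨fun i ↦ Complex.orthonormalBasisOneI.repr (ζ ^ (i : ℕ)), fun i ↦ ?_, ?_⟩
  · rw [LinearIsometryEquiv.norm_map, norm_pow, hζ.norm'_eq_one (by lia), one_pow]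
  · rw [← map_sum, Fin.sum_univ_eq_sum_range (ζ ^ ·), hζ.geom_sum_eq_zero (by lia), map_zero]

theorem exists_normalize_eq_and_norm_average_eq {ι E : Type*} [Fintype ι] [Nonempty ι]
    [NormedAddCommGroup E] [NormedSpace ℝ E] {u : ι → E} (hu : ∀ i, ‖u i‖ = 1)
    (hsum : ∑ i, u i = 0) {B : ℝ} (hB : 0 < B) :
    ∃ v : ι → E, (∀ i, ‖v i‖⁻¹ • v i = u i) ∧ ‖(Fintype.card ι : ℝ)⁻¹ • ∑ i, v i‖ = B := by
  classical
  obtain ⟨k⟩ := ‹Nonempty ι›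
  have hcard : (Fintype.card ι : ℝ) ≠ 0 := Nat.cast_ne_zero.2 Fintype.card_ne_zero
  let c (i : ι) : ℝ := B + if i = k then Fintype.card ι * B else 0
  have hc (i : ι) : 0 < c i := by positivity
  refine ⟨fun i ↦ c i • u i, fun i ↦ ?_, ?_⟩
  · rw [norm_smul, hu, mul_one, Real.norm_of_nonneg (hc i).le, inv_smul_smul₀ (hc i).ne']
  · have hsum_smul : ∑ i, c i • u i = (Fintype.card ι * B) • u k := by
      simp [c, add_smul, Finset.sum_add_distrib, ← Finset.smul_sum, hsum, ite_smul]
    rw [hsum_smul, smul_smul, inv_mul_cancel_left₀ hcard, norm_smul, hu, mul_one,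
      Real.norm_of_nonneg hB.le]

end Directions

theorem vanilla_normalized_dgd_fails_general (n : ℕ) (hn : 2 ≤ n) :
    ∃ (dim : ℕ) (L fstar σ : ℝ) (W : Matrix (Fin n) (Fin n) ℝ)
      (x0 : EuclideanSpace ℝ (Fin dim)),
      0 < L ∧ σ = 0 ∧
      (∀ i r, 0 ≤ W i r) ∧
      (∃ k : ℕ, 0 < k ∧ ∀ i r, (0 : ℝ) < (W ^ k : Matrix (Fin n) (Fin n) ℝ) i r) ∧
      (∀ i, ∑ r, W i r = 1) ∧ (∀ r, ∑ i, W i r = 1) ∧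
      ∀ B : ℝ, 1 ≤ B →
        ∃ (f : Fin n → EuclideanSpace ℝ (Fin dim) → ℝ)
          (gradf : Fin n → EuclideanSpace ℝ (Fin dim) → EuclideanSpace ℝ (Fin dim)),
          (∀ i z, HasGradientAt (f i) (gradf i z) z) ∧
          (∀ i z w, ‖gradf i z - gradf i w‖ ≤ L * ‖z - w‖) ∧
          IsGLB (Set.range fun z => (n : ℝ)⁻¹ * ∑ i, f i z) fstar ∧
          ∀ T : ℕ, 1 ≤ T → ∀ α : ℝ, 0 < α →
            ∀ x : ℕ → Fin n → EuclideanSpace ℝ (Fin dim),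
              (∀ i, x 0 i = x0) →
              (∀ t i, x (t + 1) i =
                ∑ r, W i r • (x t r - (α / ‖gradf r (x t r)‖) • gradf r (x t r))) →
              B ≤ ((n : ℝ) * (T : ℝ))⁻¹ *
                    ∑ t ∈ Finset.range T, ∑ i, ‖(n : ℝ)⁻¹ • ∑ j, gradf j (x t i)‖ := by
  have : Nonempty (Fin n) := ⟨⟨0, by lia⟩⟩
  obtain ⟨u, hu, hu_sum⟩ := exists_unit_vectors_sum_eq_zero hn
  refine ⟨2, 1, 0, 0, uniformMixing (Fin n), 0, one_pos, rfl, fun i r ↦ (uniformMixing_pos i r).le,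
    ⟨1, one_pos, by simpa only [pow_one] using uniformMixing_pos⟩, sum_uniformMixing_row,
    sum_uniformMixing_col, fun B hB ↦ ?_⟩
  obtain ⟨v, hv, hv_avg⟩ := exists_normalize_eq_and_norm_average_eq hu hu_sum (one_pos.trans_le hB)
  have hglb := isGLB_range_average_tiltedQuadratic v
  rw [hv_avg] at hglb
  rw [Fintype.card_fin] at hglb hv_avg
  refine ⟨fun i ↦ tiltedQuadratic (v i) (B ^ 2 / 2), fun i z ↦ z + v i,
    fun i ↦ hasGradientAt_tiltedQuadratic (v i) _, fun i z w ↦ by simp, hglb,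
    fun T hT α _ x hx_zero hx_step ↦ ?_⟩
  have hcancel (i : Fin n) :
      ∑ r, uniformMixing (Fin n) i r • ‖0 + v r‖⁻¹ • (0 + v r) = 0 := by
    simp only [zero_add, hv, uniformMixing_apply, ← Finset.smul_sum, hu_sum, smul_zero]
  have hx := normalizedDGD_iterate_eq_const (g := fun i z ↦ z + v i) sum_uniformMixing_row hcancel
    hx_zero hx_step
  have hB_avg : ((n : ℝ) * T)⁻¹ * ∑ _t ∈ Finset.range T, ∑ _i : Fin n, B = B := by
    simp only [Finset.sum_const, Finset.card_univ, Fintype.card_fin, Finset.card_range,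
      nsmul_eq_mul]
    field_simp
  simpa only [hx, zero_add, hv_avg] using hB_avg.ge

/-- For the vanilla decentralized normalized gradient method
`x_i^{t+1} = ∑ r, w_{ir} (x_r^t - α ∇f_r(x_r^t)/‖∇f_r(x_r^t)‖)`:
for every even `n > 0` and every `B ≥ 1`, there exist local functions `{f_i}` (on some
`ℝ^dim`) satisfying Assumptions 1–2, a gradient oracle satisfying Assumption 3 (here the
exact-gradient oracle, which satisfies it with noise level `σ = 0`), a mixing matrix `W`
satisfying Assumption 4 (nonnegative, primitive, doubly stochastic), and an initialization
`x₀`, such that the associated parameters `f_*, L, σ, W, x₀` are independent of `B`, and for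
every horizon `T ≥ 1` and every step size `α > 0` the iterates satisfy
`(1/(nT)) ∑_{t<T} ∑_i E‖∇f(x_i^t)‖ ≥ B` (the expectation being trivial since `σ = 0`). -/
theorem vanilla_normalized_dgd_fails (n : ℕ) (hn : 0 < n) (hneven : Even n) :
    ∃ (dim : ℕ) (L fstar σ : ℝ) (W : Matrix (Fin n) (Fin n) ℝ)
      (x0 : EuclideanSpace ℝ (Fin dim)),
      0 < L ∧ σ = 0 ∧
      (∀ i r, 0 ≤ W i r) ∧
      (∃ k : ℕ, 0 < k ∧ ∀ i r, (0 : ℝ) < (W ^ k : Matrix (Fin n) (Fin n) ℝ) i r) ∧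
      (∀ i, ∑ r, W i r = 1) ∧ (∀ r, ∑ i, W i r = 1) ∧
      ∀ B : ℝ, 1 ≤ B →
        ∃ (f : Fin n → EuclideanSpace ℝ (Fin dim) → ℝ)
          (gradf : Fin n → EuclideanSpace ℝ (Fin dim) → EuclideanSpace ℝ (Fin dim)),
          (∀ i z, HasGradientAt (f i) (gradf i z) z) ∧
          (∀ i z w, ‖gradf i z - gradf i w‖ ≤ L * ‖z - w‖) ∧
          IsGLB (Set.range fun z => (n : ℝ)⁻¹ * ∑ i, f i z) fstar ∧
          ∀ T : ℕ, 1 ≤ T → ∀ α : ℝ, 0 < α →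
            ∀ x : ℕ → Fin n → EuclideanSpace ℝ (Fin dim),
              (∀ i, x 0 i = x0) →
              (∀ t i, x (t + 1) i =
                ∑ r, W i r • (x t r - (α / ‖gradf r (x t r)‖) • gradf r (x t r))) →
              B ≤ ((n : ℝ) * (T : ℝ))⁻¹ *
                    ∑ t ∈ Finset.range T, ∑ i, ‖(n : ℝ)⁻¹ • ∑ j, gradf j (x t i)‖ := by
  exact vanilla_normalized_dgd_fails_general n (Nat.le_of_dvd hn hneven.two_dvd)
end

section
/- Under Assumptions 1–2, along any trajectory of GT-NSGDm in which all y_i^t are nonzero, defining the gradient estimation error ε^t := ȳ^t − ∇f(x̄^t), the following deterministic inequality holds for every horizon T ≥ 1: Σ_{t=0}^{T−1} α‖∇f(x̄^t)‖ ≤ f(x̄⁰) − f_* + Σ_{t=0}^{T−1} 2α‖ε^t‖ + Σ_{t=0}^{T−1} (α/n) Σ_{i=1}^n ‖ȳ^t − y_i^t‖ + Σ_{t=0}^{T−1} (L/2)α². -/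
/-!
The averaged iterate moves by `-α • u`, where `u` is the average of the normalized directions
`y i / ‖y i‖`, so `‖u‖ ≤ 1` and the descent lemma for `L`-smooth functions gives
`f (x̄ - α u) ≤ f x̄ - α ⟪∇f x̄, u⟫ + (L / 2) α²`. Cauchy–Schwarz bounds each
`⟪∇f x̄, y i / ‖y i‖⟫` below by `‖y i‖ - ‖y i - ∇f x̄‖`. After averaging, `‖ȳ‖ ≤ avg ‖y i‖` and
the triangle inequality through `ȳ` turn this into
`‖∇f x̄‖ - 2 ‖ȳ - ∇f x̄‖ - avg ‖ȳ - y i‖`, and summing over time telescopes. Passing to `‖ȳ‖` only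
after averaging is what keeps the coefficient of the consensus error equal to one.
-/

section NetworkAverage

variable {ι E : Type*} [Fintype ι]

/-- The uniform average `(1 / n) ∑ i, z i` of a family indexed by the nodes of a network, written
with a bar in the usual notation. It is stated for real modules so that it applies both to vectors
and to scalars, and it is `0` on an empty network. -/
noncomputable def networkAverage [AddCommMonoid E] [Module ℝ E] (z : ι → E) : E :=
  (Fintype.card ι : ℝ)⁻¹ • ∑ i, z i

theorem networkAverage_const [Nonempty ι] [AddCommMonoid E] [Module ℝ E] (c : E) :
    networkAverage (fun _ : ι => c) = c := by
  rw [networkAverage, Finset.sum_const, Finset.card_univ, ← Nat.cast_smul_eq_nsmul ℝ,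
    inv_smul_smul₀ (Nat.cast_ne_zero.2 Fintype.card_ne_zero)]

theorem networkAverage_sub [AddCommGroup E] [Module ℝ E] (z w : ι → E) :
    networkAverage (fun i => z i - w i) = networkAverage z - networkAverage w := by
  simp only [networkAverage, Finset.sum_sub_distrib, smul_sub]

theorem networkAverage_smul [AddCommMonoid E] [Module ℝ E] (c : ℝ) (z : ι → E) :
    networkAverage (fun i => c • z i) = c • networkAverage z := by
  simp only [networkAverage, ← Finset.smul_sum, smul_comm c]

theorem networkAverage_mono {a b : ι → ℝ} (hab : ∀ i, a i ≤ b i) :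
    networkAverage a ≤ networkAverage b :=
  smul_le_smul_of_nonneg_left (Finset.sum_le_sum fun i _ => hab i)
    (inv_nonneg.2 (Nat.cast_nonneg _))

theorem networkAverage_le_of_forall_le [Nonempty ι] {a : ι → ℝ} {c : ℝ} (ha : ∀ i, a i ≤ c) :
    networkAverage a ≤ c :=
  (networkAverage_mono ha).trans_eq (networkAverage_const c)

theorem norm_networkAverage_le [SeminormedAddCommGroup E] [NormedSpace ℝ E] (z : ι → E) :
    ‖networkAverage z‖ ≤ networkAverage fun i => ‖z i‖ := by
  have hcard : 0 ≤ (Fintype.card ι : ℝ)⁻¹ := by positivity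
  rw [networkAverage, norm_smul_of_nonneg hcard]
  exact smul_le_smul_of_nonneg_left (norm_sum_le _ _) hcard

theorem inner_networkAverage [SeminormedAddCommGroup E] [InnerProductSpace ℝ E] (g : E)
    (z : ι → E) : inner ℝ g (networkAverage z) = networkAverage fun i => inner ℝ g (z i) := by
  rw [networkAverage, real_inner_smul_right, inner_sum, networkAverage, smul_eq_mul]

theorem networkAverage_mixing [AddCommMonoid E] [Module ℝ E] {W : Matrix ι ι ℝ}
    (hcol : ∀ r, ∑ i, W i r = 1) (z : ι → E) :
    networkAverage (fun i => ∑ r, W i r • z r) = networkAverage z := by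
  rw [networkAverage, Finset.sum_comm]
  simp only [← Finset.sum_smul, hcol, one_smul, networkAverage]

theorem hasGradientAt_networkAverage [NormedAddCommGroup E] [InnerProductSpace ℝ E]
    [CompleteSpace E] {f : ι → E → ℝ} {g : ι → E} {z : E}
    (hf : ∀ i, HasGradientAt (f i) (g i) z) :
    HasGradientAt (fun w => networkAverage fun i => f i w) (networkAverage g) z := by
  rw [hasGradientAt_iff_hasFDerivAt, networkAverage, map_smul, map_sum]
  exact (HasFDerivAt.fun_sum fun i _ => (hf i).hasFDerivAt).const_smul (Fintype.card ι : ℝ)⁻¹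

theorem norm_networkAverage_sub_le_of_forall_norm_sub_le [Nonempty ι] [SeminormedAddCommGroup E]
    [NormedSpace ℝ E] {z w : ι → E} {c : ℝ} (h : ∀ i, ‖z i - w i‖ ≤ c) :
    ‖networkAverage z - networkAverage w‖ ≤ c := by
  rw [← networkAverage_sub]
  exact (norm_networkAverage_le _).trans (networkAverage_le_of_forall_le h)

end NetworkAverage

theorem nonneg_of_forall_norm_sub_le_mul {E E' : Type*} [NormedAddCommGroup E] [Nontrivial E]
    [SeminormedAddCommGroup E'] {G : E → E'} {L : ℝ}
    (hG : ∀ z w, ‖G z - G w‖ ≤ L * ‖z - w‖) : 0 ≤ L := by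
  obtain ⟨z, w, hzw⟩ := exists_pair_ne E
  exact nonneg_of_mul_nonneg_left ((norm_nonneg _).trans (hG z w)) (norm_sub_pos_iff.2 hzw)

section Normalize

open NormedSpace (normalize)

variable {ι E : Type*} [Fintype ι] [NormedAddCommGroup E] [NormedSpace ℝ E]

theorem norm_normalize_le_one (a : E) : ‖normalize a‖ ≤ 1 := by
  rw [NormedSpace.normalize, norm_smul, norm_inv, norm_norm]
  exact inv_mul_le_one

theorem norm_networkAverage_normalize_le_one [Nonempty ι] (y : ι → E) :
    ‖networkAverage fun i => normalize (y i)‖ ≤ 1 :=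
  (norm_networkAverage_le _).trans
    (networkAverage_le_of_forall_le fun i => norm_normalize_le_one (y i))

theorem networkAverage_normalized_step {W : Matrix ι ι ℝ} (hcol : ∀ r, ∑ i, W i r = 1) (α : ℝ)
    (x y : ι → E) :
    networkAverage (fun i => ∑ r, W i r • (x r - (α / ‖y r‖) • y r)) =
      networkAverage x - α • networkAverage fun i => normalize (y i) := by
  simp only [networkAverage_mixing hcol, networkAverage_sub, ← networkAverage_smul,
    NormedSpace.normalize, smul_smul, div_eq_mul_inv]

end Normalize

section InnerProductSpace

open NormedSpace (normalize)

variable {ι E : Type*} [Fintype ι] [NormedAddCommGroup E] [InnerProductSpace ℝ E]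

theorem le_add_inner_gradient_add_sq_norm [CompleteSpace E] {F : E → ℝ} {G : E → E} {L : ℝ} {z : E}
    (hF : ∀ w, HasGradientAt F (G w) w) (hG : ∀ w, ‖G w - G z‖ ≤ L * ‖w - z‖) (h : E) :
    F (z + h) ≤ F z + inner ℝ (G z) h + L / 2 * ‖h‖ ^ 2 := by
  have hasDerivAt_line (s : ℝ) :
      HasDerivAt (fun s : ℝ => F (z + s • h)) (inner ℝ (G (z + s • h)) h) s := by
    have hline : HasDerivAt (fun s : ℝ => z + s • h) h s := by
      simpa using ((hasDerivAt_id s).smul_const h).const_add z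
    exact (hF (z + s • h)).hasFDerivAt.comp_hasDerivAt s hline
  have hasDerivAt_majorant (s : ℝ) :
      HasDerivAt (fun s : ℝ => F z + s * inner ℝ (G z) h + L / 2 * ‖h‖ ^ 2 * s ^ 2)
        (inner ℝ (G z) h + L * ‖h‖ ^ 2 * s) s := by
    refine ((((hasDerivAt_id s).mul_const (inner ℝ (G z) h)).const_add (F z)).add
      (((hasDerivAt_id s).pow 2).const_mul (L / 2 * ‖h‖ ^ 2))).congr_deriv ?_
    simp only [one_mul, Nat.cast_ofNat, id_eq, Nat.add_one_sub_one, pow_one, mul_one]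
    ring
  have deriv_le (s : ℝ) (hs : 0 ≤ s) :
      inner ℝ (G (z + s • h)) h ≤ inner ℝ (G z) h + L * ‖h‖ ^ 2 * s := by
    rw [← sub_le_iff_le_add', ← inner_sub_left]
    calc inner ℝ (G (z + s • h) - G z) h
        ≤ ‖G (z + s • h) - G z‖ * ‖h‖ := real_inner_le_norm _ _
      _ ≤ L * ‖z + s • h - z‖ * ‖h‖ := by gcongr; exact hG _
      _ = L * ‖h‖ ^ 2 * s := by
        rw [add_sub_cancel_left, norm_smul_of_nonneg hs]
        ring
  have le_majorant := image_le_of_deriv_right_le_deriv_boundary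
    (HasDerivAt.continuousOn fun s _ => hasDerivAt_line s)
    (fun s _ => (hasDerivAt_line s).hasDerivWithinAt) (by simp)
    (HasDerivAt.continuousOn fun s _ => hasDerivAt_majorant s)
    (fun s _ => (hasDerivAt_majorant s).hasDerivWithinAt)
    (fun s hs => deriv_le s hs.1) (Set.right_mem_Icc.2 zero_le_one)
  simpa using le_majorant

theorem inner_normalize_self (a : E) : inner ℝ a (normalize a) = ‖a‖ := by
  rw [NormedSpace.normalize, real_inner_smul_right, real_inner_self_eq_norm_sq, sq, ← mul_assoc,
    inv_mul_mul_self]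

theorem norm_sub_norm_sub_le_inner_normalize (g a : E) :
    ‖a‖ - ‖a - g‖ ≤ inner ℝ g (normalize a) := by
  have hcs : inner ℝ (a - g) (normalize a) ≤ ‖a - g‖ :=
    (real_inner_le_norm _ _).trans
      (mul_le_of_le_one_right (norm_nonneg _) (norm_normalize_le_one a))
  rw [inner_sub_left, inner_normalize_self] at hcs
  linarith

theorem norm_sub_errors_le_inner_networkAverage_normalize [Nonempty ι] (g : E) (y : ι → E) :
    ‖g‖ - 2 * ‖networkAverage y - g‖ - networkAverage (fun i => ‖networkAverage y - y i‖) ≤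
      inner ℝ g (networkAverage fun i => normalize (y i)) := by
  have pointwise (i : ι) : ‖y i‖ - ‖networkAverage y - g‖ - ‖networkAverage y - y i‖ ≤
      inner ℝ g (normalize (y i)) := by
    have htri := norm_sub_le_norm_sub_add_norm_sub (y i) (networkAverage y) g
    rw [norm_sub_rev (y i) (networkAverage y)] at htri
    linarith [norm_sub_norm_sub_le_inner_normalize g (y i)]
  have averaged := networkAverage_mono pointwise
  rw [networkAverage_sub, networkAverage_sub, networkAverage_const, ← inner_networkAverage]
    at averaged
  linarith [norm_networkAverage_le y, norm_le_norm_add_norm_sub (networkAverage y) g]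

theorem mul_norm_gradient_le_of_normalized_step [Nonempty ι] [CompleteSpace E] {F : E → ℝ}
    {G : E → E} {L α : ℝ} {z : E} (hL : 0 ≤ L) (hα : 0 ≤ α)
    (hF : ∀ w, HasGradientAt F (G w) w) (hG : ∀ w, ‖G w - G z‖ ≤ L * ‖w - z‖) (y : ι → E) :
    α * ‖G z‖ ≤ F z - F (z - α • networkAverage fun i => normalize (y i)) +
      2 * α * ‖networkAverage y - G z‖ +
      α * networkAverage (fun i => ‖networkAverage y - y i‖) + L / 2 * α ^ 2 := by
  set u := networkAverage fun i => normalize (y i)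
  have descent : F (z - α • u) ≤ F z - α * inner ℝ (G z) u + L / 2 * ‖α • u‖ ^ 2 := by
    simpa [← sub_eq_add_neg, real_inner_smul_right] using
      le_add_inner_gradient_add_sq_norm hF hG (-(α • u))
  have step_norm : ‖α • u‖ ≤ α := by
    rw [norm_smul_of_nonneg hα]
    exact mul_le_of_le_one_right hα (norm_networkAverage_normalize_le_one y)
  have remainder : L / 2 * ‖α • u‖ ^ 2 ≤ L / 2 * α ^ 2 := by gcongr
  have alignment := mul_le_mul_of_nonneg_left
    (norm_sub_errors_le_inner_networkAverage_normalize (G z) y) hα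
  linarith

theorem descent_lemma_network_average_general [Nonempty ι] [CompleteSpace E]
    {f : ι → E → ℝ} {gradf : ι → E → E} (hgrad : ∀ i z, HasGradientAt (f i) (gradf i z) z)
    {L : ℝ} (hsmooth : ∀ i z w, ‖gradf i z - gradf i w‖ ≤ L * ‖z - w‖)
    {fstar : ℝ} (hfstar : ∀ z, fstar ≤ networkAverage fun i => f i z)
    {W : Matrix ι ι ℝ} (hcol : ∀ r, ∑ i, W i r = 1) {α : ℝ} (hα : 0 ≤ α) {x y : ℕ → ι → E}
    (hxrec : ∀ t i, x (t + 1) i = ∑ r, W i r • (x t r - (α / ‖y t r‖) • y t r))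
    (hynz : ∀ t i, y t i ≠ 0) (T : ℕ) :
    ∑ t ∈ Finset.range T, α * ‖networkAverage fun i => gradf i (networkAverage (x t))‖ ≤
      (networkAverage (fun i => f i (networkAverage (x 0))) - fstar) +
      (∑ t ∈ Finset.range T, 2 * α *
        ‖networkAverage (y t) - networkAverage fun i => gradf i (networkAverage (x t))‖) +
      (∑ t ∈ Finset.range T, α * networkAverage fun i => ‖networkAverage (y t) - y t i‖) +
      (∑ t ∈ Finset.range T, (L / 2) * α ^ 2) := by
  let F : E → ℝ := fun z => networkAverage fun i => f i z
  let G : E → E := fun z => networkAverage fun i => gradf i z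
  have hF (z : E) : HasGradientAt F (G z) z := hasGradientAt_networkAverage fun i => hgrad i z
  have hG (z w : E) : ‖G z - G w‖ ≤ L * ‖z - w‖ :=
    norm_networkAverage_sub_le_of_forall_norm_sub_le fun i => hsmooth i z w
  have : Nontrivial E := nontrivial_of_ne _ _ (hynz 0 (Classical.arbitrary ι))
  have hL : 0 ≤ L := nonneg_of_forall_norm_sub_le_mul hG
  have average_step (t : ℕ) : networkAverage (x (t + 1)) =
      networkAverage (x t) - α • networkAverage fun i => normalize (y t i) := by
    rw [← networkAverage_normalized_step hcol, ← funext (hxrec t)]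
  have one_step (t : ℕ) := mul_norm_gradient_le_of_normalized_step hL hα hF
    (fun w => hG w (networkAverage (x t))) (y t)
  simp only [← average_step] at one_step
  have summed := Finset.sum_le_sum fun t (_ : t ∈ Finset.range T) => one_step t
  simp only [Finset.sum_add_distrib,
    Finset.sum_range_sub' fun t => F (networkAverage (x t))] at summed
  have lower_bound : fstar ≤ F (networkAverage (x T)) := hfstar _
  exact summed.trans (by gcongr)

end InnerProductSpace

/-- (Descent lemma for the network average.)  Under Assumptions 1–2, along
any (deterministic realization of a) trajectory of GT-NSGDm in which all `y_i^t` are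
nonzero, defining the gradient estimation error `ε^t := ȳ^t - ∇f(x̄^t)`, the following
deterministic inequality holds for every horizon `T ≥ 1`:
`∑_{t<T} α ‖∇f(x̄^t)‖ ≤ f(x̄⁰) - f_* + ∑_{t<T} 2α‖ε^t‖
  + ∑_{t<T} (α/n) ∑_i ‖ȳ^t - y_i^t‖ + ∑_{t<T} (L/2) α²`.
Here `f = (1/n) ∑ i, f i`, `x̄^t`, `ȳ^t` are network averages, the stochastic gradients
`g_i^t` are arbitrary vectors (one realization), and `W` is doubly stochastic. -/
theorem descent_lemma_network_average (d n : ℕ) (hn : 0 < n)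
    (f : Fin n → EuclideanSpace ℝ (Fin d) → ℝ)
    (gradf : Fin n → EuclideanSpace ℝ (Fin d) → EuclideanSpace ℝ (Fin d))
    (hgrad : ∀ i z, HasGradientAt (f i) (gradf i z) z)
    (L : ℝ)
    (hsmooth : ∀ i z w, ‖gradf i z - gradf i w‖ ≤ L * ‖z - w‖)
    (fstar : ℝ)
    (hfstar : IsGLB (Set.range fun z => (n : ℝ)⁻¹ * ∑ i, f i z) fstar)
    (W : Matrix (Fin n) (Fin n) ℝ)
    (hrow : ∀ i, ∑ r, W i r = 1) (hcol : ∀ r, ∑ i, W i r = 1)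
    (α β : ℝ) (hα : 0 < α) (hβ : β ∈ Set.Ico (0 : ℝ) 1)
    (xbar0 : EuclideanSpace ℝ (Fin d))
    (x v y g : ℕ → Fin n → EuclideanSpace ℝ (Fin d))
    (hx0 : ∀ i, x 0 i = xbar0)
    (hv0 : ∀ i, v 0 i = (1 - β) • g 0 i)
    (hvrec : ∀ t i, v (t + 1) i = β • v t i + (1 - β) • g (t + 1) i)
    (hy0 : ∀ i, y 0 i = ∑ r, W i r • v 0 r)
    (hyrec : ∀ t i, y (t + 1) i = ∑ r, W i r • (y t r + v (t + 1) r - v t r))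
    (hxrec : ∀ t i, x (t + 1) i = ∑ r, W i r • (x t r - (α / ‖y t r‖) • y t r))
    (hynz : ∀ t i, y t i ≠ 0)
    (T : ℕ) (hT : 1 ≤ T) :
    ∑ t ∈ Finset.range T, α * ‖(n : ℝ)⁻¹ • ∑ i, gradf i ((n : ℝ)⁻¹ • ∑ j, x t j)‖ ≤
      ((n : ℝ)⁻¹ * ∑ i, f i xbar0 - fstar) +
      (∑ t ∈ Finset.range T, 2 * α *
        ‖(n : ℝ)⁻¹ • (∑ i, y t i) - (n : ℝ)⁻¹ • ∑ i, gradf i ((n : ℝ)⁻¹ • ∑ j, x t j)‖) +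
      (∑ t ∈ Finset.range T, (α / n) * ∑ i, ‖(n : ℝ)⁻¹ • (∑ j, y t j) - y t i‖) +
      (∑ t ∈ Finset.range T, (L / 2) * α ^ 2) := by
  have : Nonempty (Fin n) := Fin.pos_iff_nonempty.1 hn
  have hx0_average : networkAverage (x 0) = xbar0 := by rw [funext hx0, networkAverage_const]
  simpa [networkAverage, div_eq_mul_inv, mul_assoc, ← hx0_average] using
    descent_lemma_network_average_general hgrad hsmooth
      (fun z => by simpa [networkAverage] using hfstar.1 ⟨z, rfl⟩) hcol hα.le hxrec hynz T
end

section
/- Consider the consensus recursion x^{t+1} = (W ⊗ I_d)(x^t − α u^t) on ℝ^{nd}, where all blocks of x^0 are equal (x_i^0 = x̄⁰ for all i), each direction block satisfies ‖u_i^t‖ ≤ 1, W is doubly stochastic, and λ := ‖W − (1/n)1_n 1_nᵀ‖₂ < 1. Then for every t ≥ 0, the consensus errors satisfy (1/n) Σ_{i=1}^n ‖x_i^t − x̄^t‖ ≤ αλ/(1−λ) and ‖x^t − 1_n ⊗ x̄^t‖ ≤ α√n λ/(1−λ), where x̄^t = (1/n)Σ_i x_i^t. In particular, these bounds hold for the iterates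 x_i^t of GT-NSGDm, whose direction blocks u_i^t = y_i^t/‖y_i^t‖ are unit vectors. -/
/-!
Let `J` be the averaging matrix and `P = 1 - J`, so that the consensus error is `e = P x`. As `W`
fixes constant vectors, `W J = J`, and therefore `P W = P (W - J) P`. Since the orthogonal
projection `P` has norm at most one, the recursion gives `‖e (t + 1)‖ ≤ λ (‖e t‖ + α √n)`, and
`α √n λ / (1 - λ)` is the fixed point of the right-hand side. The bound on the mean of the block
errors follows by the Cauchy–Schwarz inequality.
-/

open Finset
open scoped Matrix.Norms.L2Operator

section BlockMulVec

variable {R E ι κ μ : Type*} [CommSemiring R] [AddCommGroup E] [Module R E] [Fintype κ]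

/-- The action `M ⊗ I` of a matrix on stacked vectors with blocks in `E`. Stacked vectors are
elements of `PiLp 2`, so that their norm is the Euclidean norm of the long vector. -/
noncomputable def blockMulVec (M : Matrix ι κ R) :
    PiLp 2 (fun _ : κ => E) →ₗ[R] PiLp 2 (fun _ : ι => E) where
  toFun z := WithLp.toLp 2 fun i => ∑ r, M i r • z r
  map_add' z w := by
    ext i
    simp only [WithLp.ofLp_add, Pi.add_apply, smul_add, sum_add_distrib]
  map_smul' c z := by
    ext i
    simp only [WithLp.ofLp_smul, Pi.smul_apply, RingHom.id_apply, smul_sum, smul_comm c]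

theorem blockMulVec_apply (M : Matrix ι κ R) (z : PiLp 2 (fun _ : κ => E)) (i : ι) :
    blockMulVec M z i = ∑ r, M i r • z r :=
  rfl

theorem blockMulVec_mul [Fintype μ] (M : Matrix ι κ R) (N : Matrix κ μ R)
    (z : PiLp 2 (fun _ : μ => E)) :
    blockMulVec (M * N) z = blockMulVec M (blockMulVec N z) := by
  ext i
  simp only [blockMulVec_apply, Matrix.mul_apply, sum_smul, smul_sum, mul_smul]
  exact sum_comm

end BlockMulVec

theorem exists_norm_sq_eq_sum_norm_inner_sq {𝕜 E : Type*} [RCLike 𝕜] [NormedAddCommGroup E]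
    [InnerProductSpace 𝕜 E] (S : Submodule 𝕜 E) [FiniteDimensional 𝕜 S] :
    ∃ (m : ℕ) (b : Fin m → E), ∀ v ∈ S, ‖v‖ ^ 2 = ∑ k, ‖inner 𝕜 (b k) v‖ ^ 2 :=
  ⟨_, fun k => stdOrthonormalBasis 𝕜 S k, fun v hv =>
    ((stdOrthonormalBasis 𝕜 S).sum_sq_norm_inner_right ⟨v, hv⟩).symm⟩

section BlockMulVecNorm

variable {𝕜 E ι κ : Type*} [RCLike 𝕜] [NormedAddCommGroup E] [InnerProductSpace 𝕜 E]
  [Fintype ι] [Fintype κ] [DecidableEq κ]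

theorem sum_norm_inner_blockMulVec_sq_le (M : Matrix ι κ 𝕜) (z : PiLp 2 (fun _ : κ => E)) (b : E) :
    ∑ i, ‖inner 𝕜 b (blockMulVec M z i)‖ ^ 2 ≤ ‖M‖ ^ 2 * ∑ r, ‖inner 𝕜 b (z r)‖ ^ 2 := by
  have hM := M.l2_opNorm_mulVec (WithLp.toLp 2 fun r => inner 𝕜 b (z r))
  have hM_sq := pow_le_pow_left₀ (norm_nonneg _) hM 2
  rw [mul_pow, EuclideanSpace.norm_sq_eq, EuclideanSpace.norm_sq_eq] at hM_sq
  simpa [blockMulVec_apply, Matrix.mulVec, dotProduct, inner_sum, inner_smul_right] using hM_sq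

/-- The blocks of `z` span a finite-dimensional space, and in orthonormal coordinates of that
space `M ⊗ I` acts as `M` on each coordinate separately. -/
theorem norm_blockMulVec_le (M : Matrix ι κ 𝕜) (z : PiLp 2 (fun _ : κ => E)) :
    ‖blockMulVec M z‖ ≤ ‖M‖ * ‖z‖ := by
  let S : Submodule 𝕜 E := Submodule.span 𝕜 (Set.range z)
  have hz (r : κ) : z r ∈ S := Submodule.subset_span ⟨r, rfl⟩
  have hMz (i : ι) : blockMulVec M z i ∈ S := S.sum_mem fun r _ => S.smul_mem _ (hz r)
  have : FiniteDimensional 𝕜 S := FiniteDimensional.span_of_finite 𝕜 (Set.finite_range z)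
  obtain ⟨m, b, hb⟩ := exists_norm_sq_eq_sum_norm_inner_sq S
  refine le_of_sq_le_sq ?_ (by positivity)
  calc ‖blockMulVec M z‖ ^ 2
      = ∑ k, ∑ i, ‖inner 𝕜 (b k) (blockMulVec M z i)‖ ^ 2 := by
        rw [PiLp.norm_sq_eq_of_L2, sum_congr rfl fun i _ => hb _ (hMz i), sum_comm]
    _ ≤ ∑ k, ‖M‖ ^ 2 * ∑ r, ‖inner 𝕜 (b k) (z r)‖ ^ 2 :=
        sum_le_sum fun k _ => sum_norm_inner_blockMulVec_sq_le M z (b k)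
    _ = (‖M‖ * ‖z‖) ^ 2 := by
        rw [← mul_sum, sum_comm, mul_pow, PiLp.norm_sq_eq_of_L2,
          sum_congr rfl fun r _ => hb _ (hz r)]

end BlockMulVecNorm

section NormComparison

variable {E ι : Type*} [SeminormedAddCommGroup E] [Fintype ι]

theorem norm_le_sqrt_card_mul_of_forall_norm_le {z : PiLp 2 (fun _ : ι => E)} {c : ℝ}
    (hc : 0 ≤ c) (hz : ∀ i, ‖z i‖ ≤ c) : ‖z‖ ≤ √(Fintype.card ι) * c := by
  refine le_of_sq_le_sq ?_ (by positivity)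
  calc ‖z‖ ^ 2 = ∑ i, ‖z i‖ ^ 2 := PiLp.norm_sq_eq_of_L2 _ z
    _ ≤ ∑ _i : ι, c ^ 2 := by gcongr with i; exact hz i
    _ = (√(Fintype.card ι) * c) ^ 2 := by simp [mul_pow]

theorem sum_norm_le_sqrt_card_mul_norm (z : PiLp 2 (fun _ : ι => E)) :
    ∑ i, ‖z i‖ ≤ √(Fintype.card ι) * ‖z‖ := by
  rw [PiLp.norm_eq_of_L2, ← Real.sqrt_mul (by positivity)]
  exact Real.le_sqrt_of_sq_le sq_sum_le_card_mul_sum_sq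

theorem inv_card_mul_sum_norm_le_of_norm_le [Nonempty ι] {z : PiLp 2 (fun _ : ι => E)} {c : ℝ}
    (hz : ‖z‖ ≤ √(Fintype.card ι) * c) : (Fintype.card ι : ℝ)⁻¹ * ∑ i, ‖z i‖ ≤ c := by
  rw [inv_mul_le_iff₀ (by positivity)]
  calc ∑ i, ‖z i‖ ≤ √(Fintype.card ι) * ‖z‖ := sum_norm_le_sqrt_card_mul_norm z
    _ ≤ √(Fintype.card ι) * (√(Fintype.card ι) * c) := by gcongr
    _ = Fintype.card ι * c := by rw [← mul_assoc, Real.mul_self_sqrt (by positivity)]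

end NormComparison

section Averaging

variable {𝕜 E ι : Type*} [RCLike 𝕜] [NormedAddCommGroup E] [InnerProductSpace 𝕜 E] [Fintype ι]

variable (𝕜 ι) in
/-- The matrix `(1/n) 1ₙ 1ₙᵀ`, the orthogonal projection onto the constant vectors. -/
noncomputable def averagingMatrix : Matrix ι ι 𝕜 :=
  (Fintype.card ι : 𝕜)⁻¹ • Matrix.of fun _ _ => 1

theorem averagingMatrix_apply (i j : ι) : averagingMatrix 𝕜 ι i j = (Fintype.card ι : 𝕜)⁻¹ := by
  simp [averagingMatrix]

theorem isStarProjection_averagingMatrix : IsStarProjection (averagingMatrix 𝕜 ι) where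
  isIdempotentElem := by
    ext i j
    simpa [Matrix.mul_apply, averagingMatrix_apply, mul_assoc] using
      inv_mul_mul_self (Fintype.card ι : 𝕜)⁻¹
  isSelfAdjoint := by
    ext i j
    simp [Matrix.star_apply, averagingMatrix_apply]

theorem mul_averagingMatrix_of_row_sum_eq_one {W : Matrix ι ι 𝕜} (hrow : ∀ i, ∑ r, W i r = 1) :
    W * averagingMatrix 𝕜 ι = averagingMatrix 𝕜 ι := by
  ext i j
  simp only [Matrix.mul_apply, averagingMatrix_apply, ← sum_mul, hrow, one_mul]

variable [DecidableEq ι]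

variable (𝕜) in
/-- The linear map sending a stacked vector `x` to its deviation `x - 1ₙ ⊗ x̄` from the mean of its
blocks, as the action of the matrix `1 - (1/n) 1ₙ 1ₙᵀ`. -/
noncomputable def consensusError : PiLp 2 (fun _ : ι => E) →ₗ[𝕜] PiLp 2 (fun _ : ι => E) :=
  blockMulVec (1 - averagingMatrix 𝕜 ι)

theorem consensusError_apply (z : PiLp 2 (fun _ : ι => E)) (i : ι) :
    consensusError 𝕜 z i = z i - (Fintype.card ι : 𝕜)⁻¹ • ∑ j, z j := by
  simp [consensusError, blockMulVec_apply, averagingMatrix_apply, Matrix.one_apply, sub_smul,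
    sum_sub_distrib, smul_sum]

theorem consensusError_const [Nonempty ι] (c : E) :
    consensusError 𝕜 (WithLp.toLp 2 fun _ : ι => c) = 0 := by
  ext i
  have hcard : (Fintype.card ι : 𝕜) ≠ 0 := Nat.cast_ne_zero.mpr Fintype.card_ne_zero
  simp [consensusError_apply, ← Nat.cast_smul_eq_nsmul 𝕜, hcard]

theorem norm_consensusError_le (z : PiLp 2 (fun _ : ι => E)) : ‖consensusError 𝕜 z‖ ≤ ‖z‖ :=
  (norm_blockMulVec_le _ z).trans <| mul_le_of_le_one_left (norm_nonneg z)
    isStarProjection_averagingMatrix.one_sub.norm_le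

end Averaging

theorem one_sub_mul_eq_of_mul_eq_self {R : Type*} [Ring R] {p a : R} (hp : IsIdempotentElem p)
    (hap : a * p = p) : (1 - p) * a = (1 - p) * (a - p) * (1 - p) := by
  have hsub : (a - p) * p = 0 := by rw [sub_mul, hap, hp.eq, sub_self]
  rw [mul_assoc, mul_one_sub, hsub, sub_zero, mul_sub, hp.one_sub_mul_self, sub_zero]

theorem le_mul_div_one_sub_of_succ_le {K : Type*} [Field K] [LinearOrder K]
    [IsStrictOrderedRing K] {a : ℕ → K} {lam c : K} (hlam : 0 ≤ lam) (hlam1 : lam < 1)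
    (hzero : a 0 ≤ c * lam / (1 - lam)) (hstep : ∀ t, a (t + 1) ≤ lam * (a t + c)) (t : ℕ) :
    a t ≤ c * lam / (1 - lam) := by
  induction t with
  | zero => exact hzero
  | succ t ih =>
    have hne : 1 - lam ≠ 0 := (sub_pos.mpr hlam1).ne'
    calc a (t + 1) ≤ lam * (a t + c) := hstep t
      _ ≤ lam * (c * lam / (1 - lam) + c) := by gcongr
      _ = c * lam / (1 - lam) := by field_simp; ring

section Consensus

variable {𝕜 E ι : Type*} [RCLike 𝕜] [NormedAddCommGroup E] [InnerProductSpace 𝕜 E]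
  [Fintype ι] [DecidableEq ι] {W : Matrix ι ι 𝕜}

theorem norm_consensusError_step_le (hrow : ∀ i, ∑ r, W i r = 1) (x v : PiLp 2 (fun _ : ι => E)) :
    ‖consensusError 𝕜 (blockMulVec W (x - v))‖ ≤
      ‖W - averagingMatrix 𝕜 ι‖ * (‖consensusError 𝕜 x‖ + ‖v‖) := by
  set J := averagingMatrix 𝕜 ι
  have hfactor : (1 - J) * W = (1 - J) * (W - J) * (1 - J) :=
    one_sub_mul_eq_of_mul_eq_self isStarProjection_averagingMatrix.isIdempotentElem
      (mul_averagingMatrix_of_row_sum_eq_one hrow)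
  calc ‖consensusError 𝕜 (blockMulVec W (x - v))‖
      = ‖consensusError 𝕜 (blockMulVec (W - J) (consensusError 𝕜 (x - v)))‖ := by
        rw [consensusError, ← blockMulVec_mul, hfactor, blockMulVec_mul, blockMulVec_mul]
    _ ≤ ‖blockMulVec (W - J) (consensusError 𝕜 (x - v))‖ := norm_consensusError_le _
    _ ≤ ‖W - J‖ * ‖consensusError 𝕜 (x - v)‖ := norm_blockMulVec_le _ _
    _ ≤ ‖W - J‖ * (‖consensusError 𝕜 x‖ + ‖v‖) := by
        rw [map_sub]
        gcongr
        exact (norm_sub_le _ _).trans (add_le_add_right (norm_consensusError_le v) _)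

theorem norm_consensusError_iterate_le (hrow : ∀ i, ∑ r, W i r = 1)
    (hW : ‖W - averagingMatrix 𝕜 ι‖ < 1) {c : ℝ} {x v : ℕ → PiLp 2 (fun _ : ι => E)}
    (hx0 : consensusError 𝕜 (x 0) = 0) (hv : ∀ t, ‖v t‖ ≤ c)
    (hrec : ∀ t, x (t + 1) = blockMulVec W (x t - v t)) (t : ℕ) :
    ‖consensusError 𝕜 (x t)‖ ≤
      c * ‖W - averagingMatrix 𝕜 ι‖ / (1 - ‖W - averagingMatrix 𝕜 ι‖) := by
  have hc : 0 ≤ c := (norm_nonneg _).trans (hv 0)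
  refine le_mul_div_one_sub_of_succ_le (a := fun t => ‖consensusError 𝕜 (x t)‖)
    (norm_nonneg _) hW ?_ (fun s => ?_) t
  · rw [hx0, norm_zero]
    exact div_nonneg (mul_nonneg hc (norm_nonneg _)) (sub_nonneg.mpr hW.le)
  · rw [hrec]
    exact (norm_consensusError_step_le hrow (x s) (v s)).trans (by gcongr; exact hv s)

end Consensus

theorem consensus_error_bound_general {𝕜 E ι : Type*} [RCLike 𝕜] [NormedAddCommGroup E]
    [InnerProductSpace 𝕜 E] [Fintype ι] [DecidableEq ι] [Nonempty ι]
    (W : Matrix ι ι 𝕜) (hrow : ∀ i, ∑ r, W i r = 1) (lam : ℝ)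
    (hlam : lam = ‖Matrix.toEuclideanCLM (𝕜 := 𝕜) (W - averagingMatrix 𝕜 ι)‖) (hlam1 : lam < 1)
    (α : 𝕜) (xbar0 : E) (x u : ℕ → ι → E) (hx0 : ∀ i, x 0 i = xbar0)
    (hu : ∀ t i, ‖u t i‖ ≤ 1) (hrec : ∀ t i, x (t + 1) i = ∑ r, W i r • (x t r - α • u t r))
    (t : ℕ) :
    (Fintype.card ι : ℝ)⁻¹ * ∑ i, ‖x t i - (Fintype.card ι : 𝕜)⁻¹ • ∑ j, x t j‖ ≤
        ‖α‖ * lam / (1 - lam) ∧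
      √(∑ i, ‖x t i - (Fintype.card ι : 𝕜)⁻¹ • ∑ j, x t j‖ ^ 2) ≤
        ‖α‖ * √(Fintype.card ι) * lam / (1 - lam) := by
  rw [Matrix.l2_opNorm_toEuclideanCLM] at hlam
  subst hlam
  let X (t : ℕ) : PiLp 2 (fun _ : ι => E) := WithLp.toLp 2 (x t)
  let V (t : ℕ) : PiLp 2 (fun _ : ι => E) := WithLp.toLp 2 (α • u t)
  have hX0 : consensusError 𝕜 (X 0) = 0 := by
    simp only [X, funext hx0, consensusError_const]
  have hV (t : ℕ) : ‖V t‖ ≤ √(Fintype.card ι) * ‖α‖ :=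
    norm_le_sqrt_card_mul_of_forall_norm_le (norm_nonneg α) fun i =>
      (norm_smul_le α (u t i)).trans (mul_le_of_le_one_right (norm_nonneg α) (hu t i))
  have hX (t : ℕ) : X (t + 1) = blockMulVec W (X t - V t) := PiLp.ext (hrec t)
  have herror := norm_consensusError_iterate_le hrow hlam1 hX0 hV hX t
  constructor
  · simpa only [consensusError_apply] using
      inv_card_mul_sum_norm_le_of_norm_le (herror.trans_eq (by ring))
  · simpa only [PiLp.norm_eq_of_L2, consensusError_apply, mul_comm ‖α‖] using herror

/-- Consider the consensus recursion `x^{t+1} = (W ⊗ I_d)(x^t - α u^t)`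
on `ℝ^{nd}` (stacked vectors modeled as maps `Fin n → EuclideanSpace ℝ (Fin d)`, the action
of `W ⊗ I_d` being the blockwise product), where all blocks of `x^0` are equal, each
direction block satisfies `‖u_i^t‖ ≤ 1`, `W` is doubly stochastic, and
`lam := ‖W - (1/n) 1ₙ 1ₙᵀ‖₂ < 1` (`ℓ₂` operator norm).  Then for every `t ≥ 0`:
`(1/n) ∑ i, ‖x_i^t - x̄^t‖ ≤ α lam/(1-lam)` and
`‖x^t - 1ₙ ⊗ x̄^t‖ = (∑ i, ‖x_i^t - x̄^t‖²)^{1/2} ≤ α √n lam/(1-lam)`.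
In particular this applies to the iterates of GT-NSGDm, whose direction blocks
`u_i^t = y_i^t/‖y_i^t‖` are unit vectors. -/
theorem consensus_error_bound (d n : ℕ) (hn : 0 < n)
    (W : Matrix (Fin n) (Fin n) ℝ)
    (hrow : ∀ i, ∑ r, W i r = 1) (hcol : ∀ r, ∑ i, W i r = 1)
    (lam : ℝ)
    (hlam : lam = ‖Matrix.toEuclideanCLM (𝕜 := ℝ) (n := Fin n)
      (W - (n : ℝ)⁻¹ • Matrix.of (fun _ _ => (1 : ℝ)))‖)
    (hlam1 : lam < 1)
    (α : ℝ) (hα : 0 < α)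
    (xbar0 : EuclideanSpace ℝ (Fin d))
    (x u : ℕ → Fin n → EuclideanSpace ℝ (Fin d))
    (hx0 : ∀ i, x 0 i = xbar0)
    (hu : ∀ t i, ‖u t i‖ ≤ 1)
    (hrec : ∀ t i, x (t + 1) i = ∑ r, W i r • (x t r - α • u t r)) :
    ∀ t : ℕ,
      (n : ℝ)⁻¹ * (∑ i, ‖x t i - (n : ℝ)⁻¹ • ∑ j, x t j‖) ≤ α * lam / (1 - lam) ∧
      Real.sqrt (∑ i, ‖x t i - (n : ℝ)⁻¹ • ∑ j, x t j‖ ^ 2) ≤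
        α * Real.sqrt n * lam / (1 - lam) := by
  have : NeZero n := ⟨hn.ne'⟩
  simpa [Real.norm_of_nonneg hα.le] using consensus_error_bound_general W hrow lam
    (by simpa [averagingMatrix] using hlam) hlam1 α xbar0 x u hx0 hu hrec
end

section
/- Let {d_t}_{t≥1} be a sequence of integrable random vectors in ℝ^d forming a martingale difference sequence with respect to its natural filtration, i.e. E[d_t | F_{t−1}] = 0 for all t, where F_t = σ(d_1, …, d_t). Then for any p ∈ [1,2] and every T ≥ 0, E[‖Σ_{t=1}^T d_t‖] ≤ 2√2 · E[(Σ_{t=1}^T ‖d_t‖^p)^{1/p}]. -/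
open MeasureTheory

/-!
The norm of `∑ d_t` is the supremum of `⟪u, ∑ d_t⟫` over `u` in the unit ball, so it is the gain of
the best fixed prediction in hindsight in an online linear optimization game there. Projected
gradient ascent with the AdaGrad step sizes `√2 / √(∑_{k ≤ t} ‖d_k‖²)` predicts `x_t` from the past
only and has regret at most `2√2 √(∑ ‖d_t‖²)` on every path. In expectation its own gain
`∑ ⟪x_t, d_t⟫` vanishes by the martingale property, and the `ℓ²` norm is at most the `ℓᵖ` norm for
`p ≤ 2`.
-/

open Finset
open scoped RealInnerProductSpace

section UnitBallProjection

variable {E : Type*} [NormedAddCommGroup E]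

/-- The radial projection onto the closed unit ball, which in an inner product space is the nearest
point projection. -/
noncomputable def unitBallProj [NormedSpace ℝ E] (x : E) : E := (max 1 ‖x‖)⁻¹ • x

lemma continuous_unitBallProj [NormedSpace ℝ E] : Continuous (unitBallProj : E → E) :=
  ((continuous_const.max continuous_norm).inv₀ fun x =>
    (one_pos.trans_le (le_max_left 1 ‖x‖)).ne').smul continuous_id

lemma norm_unitBallProj_le_one [NormedSpace ℝ E] (x : E) : ‖unitBallProj x‖ ≤ 1 := by
  have max_pos : 0 < max 1 ‖x‖ := lt_max_of_lt_left one_pos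
  rw [unitBallProj, norm_smul, norm_inv, Real.norm_of_nonneg max_pos.le, inv_mul_eq_div]
  exact div_le_one_of_le₀ (le_max_right _ _) max_pos.le

lemma norm_sub_le_norm_smul_sub [InnerProductSpace ℝ E] {c : ℝ} {x u : E} (hc : 1 ≤ c)
    (hux : ‖u‖ ≤ ‖x‖) : ‖x - u‖ ≤ ‖c • x - u‖ := by
  have inner_le : ⟪x, u⟫ ≤ ‖x‖ ^ 2 :=
    (real_inner_le_norm x u).trans (by rw [sq]; gcongr)
  rw [← sq_le_sq₀ (norm_nonneg _) (norm_nonneg _), norm_sub_sq_real, norm_sub_sq_real,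
    norm_smul, real_inner_smul_left, mul_pow, Real.norm_eq_abs, sq_abs]
  nlinarith [mul_nonneg (sub_nonneg.2 hc) (sub_nonneg.2 inner_le), sq_nonneg ((c - 1) * ‖x‖)]

lemma norm_unitBallProj_sub_le [InnerProductSpace ℝ E] (x : E) {u : E} (hu : ‖u‖ ≤ 1) :
    ‖unitBallProj x - u‖ ≤ ‖x - u‖ := by
  rcases le_total ‖x‖ 1 with hx | hx
  · simp [unitBallProj, max_eq_left hx]
  · have norm_pos : 0 < ‖x‖ := one_pos.trans_le hx
    have norm_normalize : ‖‖x‖⁻¹ • x‖ = 1 := norm_smul_inv_norm (𝕜 := ℝ) (norm_pos_iff.1 norm_pos)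
    simpa [unitBallProj, max_eq_right hx, smul_inv_smul₀ norm_pos.ne'] using
      norm_sub_le_norm_smul_sub hx (hu.trans_eq norm_normalize.symm)

lemma norm_unitBallProj_add_smul_sub_sq_le [InnerProductSpace ℝ E] (x g : E) (η : ℝ) {u : E}
    (hu : ‖u‖ ≤ 1) :
    ‖unitBallProj (x + η • g) - u‖ ^ 2 ≤ ‖x - u‖ ^ 2 + 2 * η * ⟪x - u, g⟫ + η ^ 2 * ‖g‖ ^ 2 :=
  calc ‖unitBallProj (x + η • g) - u‖ ^ 2
      ≤ ‖x + η • g - u‖ ^ 2 := by gcongr; exact norm_unitBallProj_sub_le _ hu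
    _ = ‖(x - u) + η • g‖ ^ 2 := by rw [add_sub_right_comm]
    _ = ‖x - u‖ ^ 2 + 2 * η * ⟪x - u, g⟫ + η ^ 2 * ‖g‖ ^ 2 := by
      rw [norm_add_sq_real, real_inner_smul_right, norm_smul, mul_pow, Real.norm_eq_abs, sq_abs]
      ring

end UnitBallProjection

section Regret

variable {E : Type*} [NormedAddCommGroup E]

/-- The square function `√(∑_{t < T} ‖g t‖²)` of a sequence of increments `g`. -/
noncomputable def squareFunction (g : ℕ → E) (T : ℕ) : ℝ := √(∑ t ∈ range T, ‖g t‖ ^ 2)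

lemma squareFunction_nonneg (g : ℕ → E) (T : ℕ) : 0 ≤ squareFunction g T := Real.sqrt_nonneg _

lemma squareFunction_succ_sq (g : ℕ → E) (T : ℕ) :
    squareFunction g (T + 1) ^ 2 = squareFunction g T ^ 2 + ‖g T‖ ^ 2 := by
  rw [squareFunction, squareFunction, Real.sq_sqrt (by positivity), Real.sq_sqrt (by positivity),
    sum_range_succ]

variable [InnerProductSpace ℝ E]

/-- The predictions of projected gradient ascent on the unit ball against the linear gains
`⟪·, g t⟫`, with AdaGrad step sizes: `adaGrad g t` depends on `g 0, …, g (t - 1)` only. While the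
square function vanishes the step size is the junk value `√2 / 0 = 0`, and the prediction
stays `0`. -/
noncomputable def adaGrad (g : ℕ → E) : ℕ → E
  | 0 => 0
  | t + 1 => unitBallProj (adaGrad g t + (√2 / squareFunction g (t + 1)) • g t)

lemma norm_adaGrad_le_one (g : ℕ → E) : ∀ t, ‖adaGrad g t‖ ≤ 1
  | 0 => by simp [adaGrad]
  | _ + 1 => norm_unitBallProj_le_one _

lemma mul_norm_unitBallProj_step_sub_sq_le (x g : E) {u : E} {a b : ℝ} (hu : ‖u‖ ≤ 1) (ha : 0 ≤ a)
    (hb : 0 ≤ b) (hab : b ^ 2 = a ^ 2 + ‖g‖ ^ 2) :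
    √2 / 4 * b * ‖unitBallProj (x + (√2 / b) • g) - u‖ ^ 2 ≤
      √2 / 4 * b * ‖x - u‖ ^ 2 + ⟪x - u, g⟫ + √2 * (b - a) := by
  rcases hb.eq_or_lt with rfl | b_pos
  · obtain ⟨rfl, rfl⟩ : a = 0 ∧ g = 0 := by
      have sum_eq_zero : a ^ 2 + ‖g‖ ^ 2 = 0 := by rw [← hab, zero_pow two_ne_zero]
      simpa using (add_eq_zero_iff_of_nonneg (sq_nonneg a) (sq_nonneg ‖g‖)).1 sum_eq_zero
    simp
  have norm_sq_le : ‖g‖ ^ 2 ≤ 2 * b * (b - a) := by linarith [sq_nonneg (b - a)]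
  have sqrt_two_sq : √2 ^ 2 = 2 := Real.sq_sqrt zero_le_two
  calc √2 / 4 * b * ‖unitBallProj (x + (√2 / b) • g) - u‖ ^ 2
      ≤ √2 / 4 * b *
          (‖x - u‖ ^ 2 + 2 * (√2 / b) * ⟪x - u, g⟫ + (√2 / b) ^ 2 * ‖g‖ ^ 2) := by
        gcongr; exact norm_unitBallProj_add_smul_sub_sq_le x g _ hu
    _ = √2 / 4 * b * ‖x - u‖ ^ 2 + ⟪x - u, g⟫ + √2 / (2 * b) * ‖g‖ ^ 2 := by
        field_simp
        linear_combination (4 * b * ⟪x - u, g⟫ + 2 * √2 * ‖g‖ ^ 2) * sqrt_two_sq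
    _ ≤ √2 / 4 * b * ‖x - u‖ ^ 2 + ⟪x - u, g⟫ + √2 / (2 * b) * (2 * b * (b - a)) := by gcongr
    _ = √2 / 4 * b * ‖x - u‖ ^ 2 + ⟪x - u, g⟫ + √2 * (b - a) := by field_simp

lemma inner_add_mul_norm_unitBallProj_step_sub_sq_le {x u g : E} {a b : ℝ} (hx : ‖x‖ ≤ 1)
    (hu : ‖u‖ ≤ 1) (ha : 0 ≤ a) (hb : 0 ≤ b) (hab : b ^ 2 = a ^ 2 + ‖g‖ ^ 2) :
    ⟪u, g⟫ + √2 / 4 * b * ‖unitBallProj (x + (√2 / b) • g) - u‖ ^ 2 ≤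
      ⟪x, g⟫ + √2 / 4 * a * ‖x - u‖ ^ 2 + 2 * √2 * (b - a) := by
  have a_le_b : a ≤ b := (sq_le_sq₀ ha hb).1 (by rw [hab]; linarith [sq_nonneg ‖g‖])
  have norm_sub_le_two : ‖x - u‖ ≤ 2 := (norm_sub_le x u).trans (by linarith)
  have growth : √2 / 4 * (b - a) * ‖x - u‖ ^ 2 ≤ √2 / 4 * (b - a) * 2 ^ 2 := by
    have := sub_nonneg.2 a_le_b
    gcongr
  have step := mul_norm_unitBallProj_step_sub_sq_le x g hu ha hb hab
  rw [inner_sub_left] at step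
  linarith

-- The distance term on the left is the potential that makes the induction close. Its weight is
-- `1 / (2 * η)` for the last step size `η = √2 / squareFunction g T`.
lemma inner_sum_add_mul_norm_adaGrad_sub_sq_le (g : ℕ → E) {u : E} (hu : ‖u‖ ≤ 1) (T : ℕ) :
    ⟪u, ∑ t ∈ range T, g t⟫ + √2 / 4 * squareFunction g T * ‖adaGrad g T - u‖ ^ 2 ≤
      ∑ t ∈ range T, ⟪adaGrad g t, g t⟫ + 2 * √2 * squareFunction g T := by
  induction T with
  | zero => simp [squareFunction]
  | succ T ih =>
    have step := inner_add_mul_norm_unitBallProj_step_sub_sq_le (norm_adaGrad_le_one g T) hu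
      (squareFunction_nonneg g T) (squareFunction_nonneg g (T + 1)) (squareFunction_succ_sq g T)
    rw [sum_range_succ, sum_range_succ, inner_add_right, adaGrad]
    linarith

lemma norm_sum_le_sum_inner_adaGrad_add (g : ℕ → E) (T : ℕ) :
    ‖∑ t ∈ range T, g t‖ ≤
      ∑ t ∈ range T, ⟪adaGrad g t, g t⟫ + 2 * √2 * squareFunction g T := by
  set S := ∑ t ∈ range T, g t
  have norm_direction_le : ‖‖S‖⁻¹ • S‖ ≤ 1 := by
    rw [norm_smul, norm_inv, norm_norm]
    exact inv_mul_le_one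
  have inner_direction : ⟪‖S‖⁻¹ • S, S⟫ = ‖S‖ := by
    rw [real_inner_smul_left, real_inner_self_eq_norm_sq, sq, ← mul_assoc, inv_mul_mul_self]
  have regret := inner_sum_add_mul_norm_adaGrad_sub_sq_le g norm_direction_le T
  have potential_nonneg : 0 ≤ √2 / 4 * squareFunction g T * ‖adaGrad g T - ‖S‖⁻¹ • S‖ ^ 2 := by
    have := squareFunction_nonneg g T
    positivity
  linarith

end Regret

section ExponentMonotonicity

variable {ι : Type*} {s : Finset ι}

lemma sum_rpow_rpow_one_div_le_of_exponent_le {a : ι → ℝ} (ha : ∀ i ∈ s, 0 ≤ a i) {p q : ℝ}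
    (hp : 0 < p) (hpq : p ≤ q) :
    (∑ i ∈ s, a i ^ q) ^ (1 / q) ≤ (∑ i ∈ s, a i ^ p) ^ (1 / p) := by
  classical
  have hq : 0 < q := hp.trans_le hpq
  induction s using Finset.induction_on with
  | empty => simp [Real.zero_rpow, hp.ne', hq.ne']
  | insert i s hi ih =>
    obtain ⟨ai_nonneg, as_nonneg⟩ := forall_mem_insert _ _ _ |>.1 ha
    have sum_rpow_nonneg (r : ℝ) : 0 ≤ ∑ j ∈ s, a j ^ r :=
      sum_nonneg fun j hj => Real.rpow_nonneg (as_nonneg j hj) r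
    have rpow_one_div_rpow {r : ℝ} (hr : 0 < r) :
        ((∑ j ∈ s, a j ^ r) ^ (1 / r)) ^ r = ∑ j ∈ s, a j ^ r := by
      rw [one_div, Real.rpow_inv_rpow (sum_rpow_nonneg r) hr.ne']
    have normq_nonneg : 0 ≤ (∑ j ∈ s, a j ^ q) ^ (1 / q) := Real.rpow_nonneg (sum_rpow_nonneg q) _
    calc (∑ j ∈ insert i s, a j ^ q) ^ (1 / q)
        = (a i ^ q + ((∑ j ∈ s, a j ^ q) ^ (1 / q)) ^ q) ^ (1 / q) := by
          rw [sum_insert hi, rpow_one_div_rpow hq]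
      _ ≤ (a i ^ p + ((∑ j ∈ s, a j ^ q) ^ (1 / q)) ^ p) ^ (1 / p) :=
          Real.rpow_add_rpow_le ai_nonneg normq_nonneg hp hpq
      _ ≤ (a i ^ p + ((∑ j ∈ s, a j ^ p) ^ (1 / p)) ^ p) ^ (1 / p) := by
          gcongr
          exact ih as_nonneg
      _ = (∑ j ∈ insert i s, a j ^ p) ^ (1 / p) := by
          rw [sum_insert hi, rpow_one_div_rpow hp]

lemma squareFunction_le_sum_rpow_rpow_one_div {E : Type*} [NormedAddCommGroup E] (g : ℕ → E)
    (T : ℕ) {p : ℝ} (hp : 0 < p) (hp2 : p ≤ 2) :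
    squareFunction g T ≤ (∑ t ∈ range T, ‖g t‖ ^ p) ^ (1 / p) := by
  simpa [squareFunction, Real.sqrt_eq_rpow] using
    sum_rpow_rpow_one_div_le_of_exponent_le (s := range T) (fun t _ => norm_nonneg (g t)) hp hp2

lemma integrable_sum_norm_rpow_rpow_one_div {Ω E : Type*} [NormedAddCommGroup E]
    {mΩ : MeasurableSpace Ω} {μ : Measure Ω} {f : ι → Ω → E} (hf : ∀ i ∈ s, Integrable (f i) μ)
    {p : ℝ} (hp : 1 ≤ p) :
    Integrable (fun ω => (∑ i ∈ s, ‖f i ω‖ ^ p) ^ (1 / p)) μ := by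
  refine (integrable_finsetSum s fun i hi => (hf i hi).norm).mono' ?_ (ae_of_all _ fun ω => ?_)
  · exact ((Finset.aemeasurable_fun_sum s fun i hi =>
      (hf i hi).norm.aemeasurable.pow_const p).pow_const (1 / p)).aestronglyMeasurable
  · rw [Real.norm_of_nonneg (by positivity)]
    simpa using sum_rpow_rpow_one_div_le_of_exponent_le (s := s)
      (fun i _ => norm_nonneg (f i ω)) one_pos hp

end ExponentMonotonicity

section MartingaleDifferences

variable {Ω E : Type*} [NormedAddCommGroup E] {mΩ : MeasurableSpace Ω} {μ : Measure Ω}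
  {𝓕 : Filtration ℕ mΩ} {g : ℕ → Ω → E}

lemma stronglyMeasurable_squareFunction (hg : ∀ t, StronglyMeasurable[𝓕 (t + 1)] (g t)) (T : ℕ) :
    StronglyMeasurable[𝓕 T] fun ω => squareFunction (g · ω) T :=
  Real.continuous_sqrt.comp_stronglyMeasurable <|
    Finset.stronglyMeasurable_fun_sum _ fun t ht =>
      ((hg t).mono (𝓕.mono (mem_range.1 ht))).norm.pow 2

variable [InnerProductSpace ℝ E]

lemma integrable_inner_of_norm_le {f g : Ω → E} {C : ℝ} (hf : AEStronglyMeasurable f μ)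
    (hfC : ∀ ω, ‖f ω‖ ≤ C) (hg : Integrable g μ) : Integrable (fun ω => ⟪f ω, g ω⟫) μ :=
  (hg.norm.const_mul C).mono' (hf.inner hg.aestronglyMeasurable) <| ae_of_all _ fun ω =>
    (norm_inner_le_norm _ _).trans (by gcongr; exact hfC ω)

lemma integral_inner_eq_zero_of_condExp_eq_zero [CompleteSpace E] {m : MeasurableSpace Ω}
    (hm : m ≤ mΩ) [SigmaFinite (μ.trim hm)] {f g : Ω → E} (hf : StronglyMeasurable[m] f)
    (hfg : Integrable (fun ω => ⟪f ω, g ω⟫) μ) (hg : Integrable g μ) (hgm : μ[g | m] =ᵐ[μ] 0) :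
    ∫ ω, ⟪f ω, g ω⟫ ∂μ = 0 := by
  rw [← integral_condExp hm]
  refine integral_eq_zero_of_ae ?_
  filter_upwards [condExp_bilin_of_stronglyMeasurable_left (innerSL ℝ) hf hfg hg, hgm]
    with ω pull_out condExp_zero
  exact pull_out.trans (by simp [condExp_zero])

lemma stronglyMeasurable_adaGrad (hg : ∀ t, StronglyMeasurable[𝓕 (t + 1)] (g t)) (t : ℕ) :
    StronglyMeasurable[𝓕 t] fun ω => adaGrad (g · ω) t := by
  induction t with
  | zero => exact stronglyMeasurable_const
  | succ t ih =>
    have stepSize : StronglyMeasurable[𝓕 (t + 1)]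
        fun ω => √2 / squareFunction (g · ω) (t + 1) :=
      (measurable_const.div
        (stronglyMeasurable_squareFunction hg (t + 1)).measurable).stronglyMeasurable
    exact continuous_unitBallProj.comp_stronglyMeasurable <|
      (ih.mono (𝓕.mono t.le_succ)).add (stepSize.smul (hg t))

theorem mds_norm_sum_le_general [CompleteSpace E] [IsFiniteMeasure μ]
    (hadapted : ∀ t, StronglyMeasurable[𝓕 (t + 1)] (g t)) (hint : ∀ t, Integrable (g t) μ)
    (hmds : ∀ t, μ[g t | 𝓕 t] =ᵐ[μ] 0) {p : ℝ} (hp1 : 1 ≤ p) (hp2 : p ≤ 2) (T : ℕ) :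
    ∫ ω, ‖∑ t ∈ range T, g t ω‖ ∂μ ≤
      2 * √2 * ∫ ω, (∑ t ∈ range T, ‖g t ω‖ ^ p) ^ (1 / p) ∂μ := by
  have gain_integrable (t : ℕ) : Integrable (fun ω => ⟪adaGrad (g · ω) t, g t ω⟫) μ :=
    integrable_inner_of_norm_le
      ((stronglyMeasurable_adaGrad hadapted t).mono (𝓕.le t)).aestronglyMeasurable
      (fun ω => norm_adaGrad_le_one (g · ω) t) (hint t)
  have gain_integral (t : ℕ) : ∫ ω, ⟪adaGrad (g · ω) t, g t ω⟫ ∂μ = 0 :=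
    integral_inner_eq_zero_of_condExp_eq_zero (𝓕.le t) (stronglyMeasurable_adaGrad hadapted t)
      (gain_integrable t) (hint t) (hmds t)
  have total_gain_integrable := integrable_finsetSum (range T) fun t _ => gain_integrable t
  have bound_integrable := (integrable_sum_norm_rpow_rpow_one_div (s := range T)
    (fun t _ => hint t) hp1).const_mul (2 * √2)
  calc ∫ ω, ‖∑ t ∈ range T, g t ω‖ ∂μ
      ≤ ∫ ω, (∑ t ∈ range T, ⟪adaGrad (g · ω) t, g t ω⟫ +
          2 * √2 * (∑ t ∈ range T, ‖g t ω‖ ^ p) ^ (1 / p)) ∂μ := by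
        refine integral_mono (integrable_finsetSum _ fun t _ => hint t).norm
          (total_gain_integrable.add bound_integrable) fun ω => ?_
        refine (norm_sum_le_sum_inner_adaGrad_add (g · ω) T).trans ?_
        gcongr
        exact squareFunction_le_sum_rpow_rpow_one_div _ T (one_pos.trans_le hp1) hp2
    _ = 2 * √2 * ∫ ω, (∑ t ∈ range T, ‖g t ω‖ ^ p) ^ (1 / p) ∂μ := by
        rw [integral_add total_gain_integrable bound_integrable,
          integral_finsetSum _ fun t _ => gain_integrable t, sum_eq_zero fun t _ => gain_integral t,
          zero_add, integral_const_mul]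

end MartingaleDifferences

section PastFiltration

variable {Ω E : Type*} {mΩ : MeasurableSpace Ω} [MeasurableSpace E]

/-- The filtration `F_t = σ(d_1, …, d_t)`. It differs from `Filtration.natural` in that `d_0` is
left out, so that `F_0` is trivial. -/
def pastFiltration (d : ℕ → Ω → E) (hd : ∀ t, Measurable (d t)) : Filtration ℕ mΩ where
  seq t := ⨆ k ∈ Icc 1 t, MeasurableSpace.comap (d k) inferInstance
  mono' _ _ hst := biSup_mono fun _ hk => Icc_subset_Icc_right hst hk
  le' _ := iSup₂_le fun k _ => (hd k).comap_le

lemma measurable_pastFiltration_succ {d : ℕ → Ω → E} (hd : ∀ t, Measurable (d t)) (t : ℕ) :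
    Measurable[pastFiltration d hd (t + 1)] (d (t + 1)) :=
  measurable_iff_comap_le.2 <| le_iSup₂_of_le (t + 1) (right_mem_Icc.2 t.succ_pos) le_rfl

end PastFiltration

lemma sum_Icc_one_eq_sum_range {M : Type*} [AddCommMonoid M] (f : ℕ → M) (T : ℕ) :
    ∑ t ∈ Icc 1 T, f t = ∑ t ∈ range T, f (t + 1) := by
  rw [range_eq_Ico, sum_Ico_add' f 0 T 1, zero_add, Ico_add_one_right_eq_Icc]

/-- Let `{d_t}_{t ≥ 1}` be a sequence of integrable random vectors in `ℝ^d`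
forming a martingale difference sequence with respect to its natural filtration
`F_t = σ(d_1, …, d_t)`, i.e. `E[d_t | F_{t-1}] = 0` for all `t ≥ 1` (with `F_0` the trivial
σ-algebra).  Then for any `p ∈ [1, 2]` and every `T ≥ 0`,
`E[‖∑_{t=1}^T d_t‖] ≤ 2√2 · E[(∑_{t=1}^T ‖d_t‖^p)^{1/p}]`. -/
theorem mds_norm_sum_le (dim : ℕ) (Ω : Type*) (mΩ : MeasurableSpace Ω)
    (μ : Measure Ω) (hμ : IsProbabilityMeasure μ)
    (dseq : ℕ → Ω → EuclideanSpace ℝ (Fin dim))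
    (hmeas : ∀ t, Measurable (dseq t))
    (hint : ∀ t, Integrable (dseq t) μ)
    (𝓕 : ℕ → MeasurableSpace Ω)
    (h𝓕 : ∀ t, 𝓕 t = ⨆ k ∈ Finset.Icc 1 t,
      MeasurableSpace.comap (dseq k) (inferInstance : MeasurableSpace (EuclideanSpace ℝ (Fin dim))))
    (hmds : ∀ t, 1 ≤ t → μ[dseq t|𝓕 (t - 1)] =ᵐ[μ] 0)
    (p : ℝ) (hp1 : 1 ≤ p) (hp2 : p ≤ 2) :
    ∀ T : ℕ,
      ∫ ω, ‖∑ t ∈ Finset.Icc 1 T, dseq t ω‖ ∂μ ≤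
        2 * Real.sqrt 2 * ∫ ω, (∑ t ∈ Finset.Icc 1 T, ‖dseq t ω‖ ^ p) ^ (1 / p) ∂μ := by
  obtain rfl : 𝓕 = pastFiltration dseq hmeas := funext h𝓕
  simpa only [sum_Icc_one_eq_sum_range] using mds_norm_sum_le_general
    (fun t => (measurable_pastFiltration_succ hmeas t).stronglyMeasurable)
    (fun t => hint (t + 1)) (fun t => hmds (t + 1) t.succ_pos) hp1 hp2
end
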